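/- The number of isomorphism classes of 3-uniform hypergraphs on 7 vertices that contain no K₄⁻ as a subgraph (i.e., no four distinct vertices span three or more edges) is exactly 8157. -/

import Mathlib

/-- A `K₄⁻`-free 3-uniform hypergraph on 7 vertices: a collection of
3-element subsets of `Fin 7` such that no four vertices span three or more
edges. -/
def K4minusFree7 : Type :=
  {E : Finset (Finset (Fin 7)) //
    (∀ e ∈ E, e.card = 3) ∧
    ∀ s : Finset (Fin 7), s.card = 4 → (E.filter (fun e => e ⊆ s)).card < 3}

/-- Two such hypergraphs are isomorphic when some permutation of the vertices
maps edges to edges and non-edges to non-edges. -/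
def IsoHG7 (E F : K4minusFree7) : Prop :=
  ∃ σ : Equiv.Perm (Fin 7), ∀ s : Finset (Fin 7), s ∈ E.1 ↔ s.image σ ∈ F.1

/-!
The symmetric group on the seven vertices acts on the `K₄⁻`-free hypergraphs, and the isomorphism
classes are the orbits. By Burnside's lemma (`sum_fixCount`) their number times `7!` is the sum,
over all permutations `σ`, of the number `fixCount σ` of hypergraphs fixed by `σ`. This number
depends only on the cycle type of `σ` (`fixCount_congr`), and there are fifteen cycle types, whose
classes have known sizes; so fifteen counts have to be made, and they give
`∑ σ, fixCount σ = 8157 * 5040` (`sum_fixCount_eq_mul`).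

A hypergraph is fixed by `σ` exactly when it is a union of `σ`-orbits of triples. The free unions
are counted by deciding, one orbit after the other, whether to take it, and abandoning a branch
as soon as some 4-set spans three edges (`card_between`, `countExt`). For speed, the numbers of
edges inside the 35 four-element sets are kept as the octal digits of a single natural number.
Each digit is at most 4, so taking an orbit is one addition, and all digits are at most 2
exactly when adding 1 to each digit sets no bit of value 4 (`small_total`). For the fourteen
nontrivial cycle types the kernel evaluates this search directly (`fixCount_of_check`).

For the identity there are 35333735 free hypergraphs, too many to be visited one by one. The
triples through the vertex 6 form a graph on the other six vertices, the link of 6. The number of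
hypergraphs with a given link does not change when these six vertices are permuted, so the
possible links are replaced by a few representatives with multiplicities (`wsum_link4`,
`wsum_link5`, `wsum_link6`), one vertex being added at a time. For each representative, the search
above counts the ways to add triples that avoid the vertex 6 (`wsum_eq_leafSum`). It is never
needed that the representatives are inequivalent: a repetition would only cost time.
-/

open Finset

/-- The 35 possible edges. -/
def triples : Finset (Finset (Fin 7)) := powersetCard 3 univ

/-- No four vertices span three or more members of `E`. -/
def Free (E : Finset (Finset (Fin 7))) : Prop :=
  ∀ q : Finset (Fin 7), q.card = 4 → (E.filter (fun e => e ⊆ q)).card < 3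

open scoped Classical in
/-- All `K₄⁻`-free hypergraphs on `Fin 7`, as a finset of edge sets. -/
noncomputable def allFree : Finset (Finset (Finset (Fin 7))) :=
  triples.powerset.filter Free

theorem mem_allFree {E : Finset (Finset (Fin 7))} :
    E ∈ allFree ↔ E ⊆ triples ∧ Free E := by
  classical
  simp [allFree]

theorem mem_triples {e : Finset (Fin 7)} : e ∈ triples ↔ e.card = 3 := by
  simp [triples, mem_powersetCard]

theorem Free.mono {E F : Finset (Finset (Fin 7))} (h : E ⊆ F) (hF : Free F) : Free E :=
  fun q hq => (card_le_card (filter_subset_filter _ h)).trans_lt (hF q hq)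

/-! ### Vertex sets as bit masks -/

/-- The vertex set with characteristic bits `m`. -/
def dec (m : ℕ) : Finset (Fin 7) := univ.filter fun i => m.testBit i

theorem mem_dec {m : ℕ} {i : Fin 7} : i ∈ dec m ↔ m.testBit i = true := by simp [dec]

theorem dec_ofBits (e : Finset (Fin 7)) : dec (Nat.ofBits fun i : Fin 7 => decide (i ∈ e)) = e := by
  ext i
  rw [mem_dec, Nat.testBit_ofBits_lt _ _ i.2]
  simp

theorem dec_inj {a b : ℕ} (ha : a < 128) (hb : b < 128) (h : dec a = dec b) : a = b := by
  refine Nat.eq_of_testBit_eq fun i => ?_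
  by_cases hi : i < 7
  · have := congrArg (fun e => (⟨i, hi⟩ : Fin 7) ∈ e) h
    simp only [mem_dec, eq_iff_iff] at this
    exact Bool.eq_iff_iff.2 this
  · have h7 : 2 ^ 7 ≤ 2 ^ i := Nat.pow_le_pow_right (by norm_num) (by omega)
    rw [Nat.testBit_lt_two_pow (ha.trans_le h7), Nat.testBit_lt_two_pow (hb.trans_le h7)]

theorem dec_subset_dec {a b : ℕ} (ha : a < 128) (hb : b < 128) :
    dec a ⊆ dec b ↔ Nat.land a b = a := by
  change _ ↔ a &&& b = a
  constructor
  · intro h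
    refine dec_inj (Nat.and_lt_two_pow (n := 7) _ hb) ha ?_
    ext i
    have := @h i
    simp only [mem_dec, Nat.testBit_and, Bool.and_eq_true] at this ⊢
    tauto
  · intro h i hi
    rw [mem_dec, ← h, Nat.testBit_and, Bool.and_eq_true] at hi
    exact mem_dec.2 hi.2

/-- The number of elements of `dec m`. -/
def popcount (m : ℕ) : ℕ := m % 2 + m / 2 % 2 + m / 4 % 2 + m / 8 % 2 + m / 16 % 2 + m / 32 % 2 +
  m / 64 % 2

theorem card_dec (m : ℕ) : (dec m).card = popcount m := by
  have h : ∀ i, (if m.testBit i = true then 1 else 0) = m / 2 ^ i % 2 := by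
    intro i
    simp only [Nat.testBit_eq_decide_div_mod_eq, decide_eq_true_iff]
    split_ifs <;> omega
  rw [dec, card_filter, Fin.sum_univ_seven]
  simp only [h, popcount]
  simp

/-- The masks of the vertex sets of size `k`. -/
def masks (k : ℕ) : List ℕ := (List.range 128).filter fun m => Nat.beq (popcount m) k

theorem lt_of_mem_masks {k m : ℕ} (h : m ∈ masks k) : m < 128 :=
  List.mem_range.1 (List.mem_of_mem_filter h)

theorem mem_map_masks (k : ℕ) (q : Finset (Fin 7)) : q ∈ (masks k).map dec ↔ q.card = k := by
  simp only [List.mem_map, masks, List.mem_filter, Nat.beq_eq, ← card_dec]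
  constructor
  · rintro ⟨m, ⟨_, h⟩, rfl⟩
    exact h
  · intro h
    exact ⟨_, ⟨List.mem_range.2 (Nat.ofBits_lt_two_pow _), by rwa [dec_ofBits]⟩, dec_ofBits q⟩

theorem nodup_map_masks (k : ℕ) : ((masks k).map dec).Nodup :=
  List.Nodup.map_on (fun _ ha _ hb => dec_inj (lt_of_mem_masks ha) (lt_of_mem_masks hb))
    (List.nodup_range.filter _)

/-- `σ` maps the vertex set with mask `a` to the one with mask `b`. -/
def Maps (σ : Equiv.Perm (Fin 7)) (a b : ℕ) : Prop := ∀ i, b.testBit (σ i) = a.testBit i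

instance (σ : Equiv.Perm (Fin 7)) (a b : ℕ) : Decidable (Maps σ a b) :=
  inferInstanceAs (Decidable (∀ _, _))

theorem Maps.image_dec {σ : Equiv.Perm (Fin 7)} {a b : ℕ} (h : Maps σ a b) :
    (dec a).image σ = dec b := by
  ext i
  rw [← σ.apply_symm_apply i, mem_dec, h, ← mem_dec]
  exact σ.injective.mem_finset_image

/-- The masks of the 35 triples. -/
def triMasks : List ℕ :=
  [7, 11, 13, 14, 19, 21, 22, 25, 26, 28, 35, 37, 38, 41, 42, 44, 49, 50, 52, 56, 67, 69, 70, 73,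
   74, 76, 81, 82, 84, 88, 97, 98, 100, 104, 112]

/-- The masks of the 35 four-element sets. -/
def quadMasks : List ℕ :=
  [15, 23, 27, 29, 30, 39, 43, 45, 46, 51, 53, 54, 57, 58, 60, 71, 75, 77, 78, 83, 85, 86, 89,
   90, 92, 99, 101, 102, 105, 106, 108, 113, 114, 116, 120]

theorem triMasks_eq : triMasks = masks 3 := by decide +kernel

theorem quadMasks_eq : quadMasks = masks 4 := by decide +kernel

/-! ### Packed edge counts -/

/-- The 35 four-element vertex sets. -/
def quads : List (Finset (Fin 7)) := quadMasks.map dec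

theorem mem_quads (q : Finset (Fin 7)) : q ∈ quads ↔ q.card = 4 := by
  rw [quads, quadMasks_eq, mem_map_masks]

/-- The number whose base-8 digits are the values of `c` along `L`. -/
def pack (c : Finset (Fin 7) → ℕ) (L : List (Finset (Fin 7))) : ℕ :=
  L.foldr (fun q a => c q + 8 * a) 0

/-- The packed contribution of a triple: digit 1 at each 4-set containing it. -/
def weight (e : Finset (Fin 7)) : ℕ := pack (fun q => if e ⊆ q then 1 else 0) quads

/-- The packed list of the numbers of members of `P` inside each 4-set. -/
def total (P : Finset (Finset (Fin 7))) : ℕ := ∑ e ∈ P, weight e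

/-- The weight of the triple with mask `a`. -/
def wt (a : ℕ) : ℕ :=
  quadMasks.foldr (fun b r => cond (Nat.beq (Nat.land a b) a) (Nat.add 1 (Nat.mul 8 r))
    (Nat.mul 8 r)) 0

theorem weight_dec {a : ℕ} (ha : a < 128) : weight (dec a) = wt a := by
  have h : ∀ L : List ℕ, (∀ b ∈ L, b < 128) →
      pack (fun q => if dec a ⊆ q then 1 else 0) (L.map dec) =
        L.foldr (fun b r => cond (Nat.beq (Nat.land a b) a) (Nat.add 1 (Nat.mul 8 r))
          (Nat.mul 8 r)) 0 := by
    intro L hL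
    induction L with
    | nil => rfl
    | cons b L ih =>
      rw [List.forall_mem_cons] at hL
      simp only [pack, List.map_cons, List.foldr_cons] at ih ⊢
      rw [ih hL.2]
      by_cases h : dec a ⊆ dec b
      · rw [if_pos h, Nat.beq_eq.mpr ((dec_subset_dec ha hL.1).1 h)]
        rfl
      · rw [if_neg h, Bool.eq_false_iff.2
          fun h' => h ((dec_subset_dec ha hL.1).2 (Nat.eq_of_beq_eq_true h')), zero_add]
        rfl
  exact h _ fun b hb => lt_of_mem_masks (k := 4) (quadMasks_eq ▸ hb)

theorem pack_sum (P : Finset (Finset (Fin 7))) (c : Finset (Fin 7) → Finset (Fin 7) → ℕ)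
    (L : List (Finset (Fin 7))) :
    ∑ e ∈ P, pack (c e) L = pack (fun q => ∑ e ∈ P, c e q) L := by
  induction L with
  | nil => simp [pack]
  | cons q L ih =>
    simp only [pack, List.foldr_cons] at ih ⊢
    rw [sum_add_distrib, ← mul_sum, ih]

theorem total_eq (P : Finset (Finset (Fin 7))) :
    total P = pack (fun q => (P.filter (fun e => e ⊆ q)).card) quads := by
  simp only [total, weight, pack_sum, card_filter]

theorem land_digit (a b x y : ℕ) (ha : a < 8) (hb : b < 8) :
    Nat.land (a + 8 * x) (b + 8 * y) = 0 ↔ Nat.land a b = 0 ∧ Nat.land x y = 0 := by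
  change (a + 8 * x) &&& (b + 8 * y) = 0 ↔ a &&& b = 0 ∧ x &&& y = 0
  have h1 : ((a + 8 * x) &&& (b + 8 * y)) / 2 ^ 3 = x &&& y := by
    rw [Nat.and_div_two_pow]; congr 1 <;> omega
  have h2 : ((a + 8 * x) &&& (b + 8 * y)) % 2 ^ 3 = a &&& b := by
    rw [Nat.and_mod_two_pow]; congr 1 <;> omega
  omega

/-- Adding 1 to an octal digit `c < 7` sets its bit of value 4 exactly when `c ≥ 3`. -/
theorem land_pack (c : Finset (Fin 7) → ℕ) (L : List (Finset (Fin 7)))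
    (hc : ∀ q ∈ L, c q < 7) :
    Nat.land (Nat.add (pack c L) (pack (fun _ => 1) L)) (pack (fun _ => 4) L) = 0 ↔
      ∀ q ∈ L, c q < 3 := by
  induction L with
  | nil => simp [pack]
  | cons q L ih =>
    have ih' := ih fun q hq => hc q (List.mem_cons_of_mem _ hq)
    have hq := hc q List.mem_cons_self
    simp only [pack, List.foldr_cons, Nat.add_eq, List.forall_mem_cons] at ih' ⊢
    rw [← ih', show ∀ x y : ℕ, c q + 8 * x + (1 + 8 * y) = (c q + 1) + 8 * (x + y) by
      intros; ring, land_digit _ _ _ _ (by omega) (by norm_num)]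
    refine and_congr_left fun _ => ?_
    generalize c q = k at hq
    interval_cases k <;> decide

/-- The packed test that all counts are at most 2; the constants have all octal digits equal
to 1 and to 4. -/
def small (m : ℕ) : Bool :=
  Nat.beq (Nat.land (Nat.add m 5794974172471905835413500367433)
    23179896689887623341654001469732) 0

theorem pack_ones : pack (fun _ => 1) quads = 5794974172471905835413500367433 := by
  rw [pack, quads, List.foldr_map]
  decide +kernel

theorem pack_fours : pack (fun _ => 4) quads = 23179896689887623341654001469732 := by
  rw [pack, quads, List.foldr_map]
  decide +kernel

theorem small_total {P : Finset (Finset (Fin 7))} (hP : P ⊆ triples) :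
    small (total P) = true ↔ Free P := by
  have hc : ∀ q ∈ quads, (P.filter (fun e => e ⊆ q)).card < 7 := by
    intro q hq
    have hq4 := (mem_quads q).1 hq
    have hsub : P.filter (fun e => e ⊆ q) ⊆ powersetCard 3 q := by
      intro e he
      rw [mem_filter] at he
      exact mem_powersetCard.2 ⟨he.2, mem_triples.1 (hP he.1)⟩
    have := card_le_card hsub
    rw [card_powersetCard, hq4] at this
    exact this.trans_lt (by decide)
  have := land_pack _ quads hc
  rw [pack_ones, pack_fours, ← total_eq] at this
  rw [small, Nat.beq_eq, this]
  exact forall_congr' fun q => by rw [mem_quads]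

/-! ### Counting unions of blocks -/

/-- The number of ways to choose some of the listed increments so that, starting from `s`,
the running totals `m` satisfy `(m + a) &&& b = 0`. The list holds each increment plus one. The
recursors keep evaluation in the kernel fast: matching on `s + (d + 1)` as a successor
replaces the new state by a numeral before it is used. -/
def tree (a b : ℕ) (l : List ℕ) : ℕ → ℕ :=
  List.rec (fun _ => 1) (fun d _ ih s => Nat.add (ih s)
    (Nat.rec 0 (fun y _ => Nat.rec (ih y) (fun _ _ => 0) (Nat.land (Nat.add y a) b))
      (Nat.add s d))) l

theorem tree_cons (a b d : ℕ) (l : List ℕ) (s : ℕ) :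
    tree a b ((d + 1) :: l) s =
      tree a b l s +
        if Nat.beq (Nat.land (Nat.add (s + d) a) b) 0 then tree a b l (s + d) else 0 := by
  have h : tree a b ((d + 1) :: l) s = tree a b l s +
      Nat.rec (tree a b l (s + d)) (fun _ _ => 0) (Nat.land (Nat.add (s + d) a) b) := rfl
  rw [h]
  generalize Nat.land _ _ = z
  cases z <;> simp [Nat.beq]

/-- The number of ways to choose some of the listed increments so that, starting from the
packed counts `s`, all counts stay at most 2. The list holds each increment plus one. -/
def countExt (l : List ℕ) : ℕ → ℕ :=
  tree 5794974172471905835413500367433 23179896689887623341654001469732 l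

theorem countExt_nil (s : ℕ) : countExt [] s = 1 := rfl

theorem countExt_cons (d : ℕ) (l : List ℕ) (s : ℕ) :
    countExt ((d + 1) :: l) s =
      countExt l s + if small (s + d) then countExt l (s + d) else 0 :=
  tree_cons _ _ d l s

open scoped Classical in
/-- The `K₄⁻`-free hypergraphs that consist of `P` and some of the blocks in `os`. -/
noncomputable def between (os : List (Finset (Finset (Fin 7)))) (P : Finset (Finset (Fin 7))) :
    Finset (Finset (Finset (Fin 7))) :=
  allFree.filter fun E => P ⊆ E ∧ (∀ e ∈ E, e ∈ P ∨ ∃ o ∈ os, e ∈ o) ∧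
    ∀ o ∈ os, o ⊆ E ∨ Disjoint o E

theorem mem_between {os : List (Finset (Finset (Fin 7)))} {P E : Finset (Finset (Fin 7))} :
    E ∈ between os P ↔ E ∈ allFree ∧ P ⊆ E ∧ (∀ e ∈ E, e ∈ P ∨ ∃ o ∈ os, e ∈ o) ∧
      ∀ o ∈ os, o ⊆ E ∨ Disjoint o E := by
  classical
  simp [between]

theorem between_cons {o : Finset (Finset (Fin 7))} {os : List (Finset (Finset (Fin 7)))}
    {P : Finset (Finset (Fin 7))} (hd : ∀ o' ∈ os, Disjoint o o') (hP : Disjoint P o) :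
    between (o :: os) P = between os P ∪ between os (P ∪ o) := by
  ext E
  rw [mem_union]
  simp only [mem_between, List.forall_mem_cons, List.exists_mem_cons_iff]
  constructor
  · rintro ⟨hE, hPE, hmem, ho, hos⟩
    rcases ho with ho | ho
    · refine Or.inr ⟨hE, union_subset hPE ho, fun e he => ?_, hos⟩
      rcases hmem e he with h | h | h
      · exact Or.inl (mem_union_left _ h)
      · exact Or.inl (mem_union_right _ h)
      · exact Or.inr h
    · refine Or.inl ⟨hE, hPE, fun e he => ?_, hos⟩
      rcases hmem e he with h | h | h
      · exact Or.inl h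
      · exact absurd he (disjoint_left.1 ho h)
      · exact Or.inr h
  · rintro (⟨hE, hPE, hmem, hos⟩ | ⟨hE, hPE, hmem, hos⟩)
    · refine ⟨hE, hPE, fun e he => (hmem e he).imp_right Or.inr, Or.inr ?_, hos⟩
      refine disjoint_left.2 fun e heo heE => ?_
      rcases hmem e heE with h | ⟨o', ho', h⟩
      · exact disjoint_left.1 hP h heo
      · exact disjoint_left.1 (hd o' ho') heo h
    · refine ⟨hE, subset_union_left.trans hPE, fun e he => ?_,
        Or.inl (subset_union_right.trans hPE), hos⟩
      rcases hmem e he with h | h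
      · exact (mem_union.1 h).imp_right Or.inl
      · exact Or.inr (Or.inr h)

theorem card_between (os : List (Finset (Finset (Fin 7)))) :
    ∀ P : Finset (Finset (Fin 7)), P ⊆ triples → Free P → (∀ o ∈ os, o ⊆ triples) →
      (∀ o ∈ os, o.Nonempty) → os.Pairwise Disjoint → (∀ o ∈ os, Disjoint P o) →
      (between os P).card = countExt (os.map fun o => total o + 1) (total P) := by
  induction os with
  | nil =>
    intro P hP hf _ _ _ _
    have : between [] P = {P} := by
      ext E
      simp only [mem_between, mem_singleton, List.not_mem_nil, false_and, exists_false, or_false,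
        false_imp_iff, implies_true, and_true]
      constructor
      · rintro ⟨_, h1, h2⟩
        exact Subset.antisymm h2 h1
      · rintro rfl
        exact ⟨mem_allFree.2 ⟨hP, hf⟩, Subset.rfl, fun _ => id⟩
    rw [this]; rfl
  | cons o os ih =>
    intro P hP hf hsub hne hpw hdis
    rw [List.forall_mem_cons] at hsub hne hdis
    rw [List.pairwise_cons] at hpw
    have hPo : P ∪ o ⊆ triples := union_subset hP hsub.1
    have htot : total (P ∪ o) = total P + total o := sum_union hdis.1
    rw [between_cons hpw.1 hdis.1, card_union_of_disjoint, List.map_cons, countExt_cons,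
      ih P hP hf hsub.2 hne.2 hpw.2 hdis.2, ← htot]
    · congr 1
      by_cases h : Free (P ∪ o)
      · rw [if_pos ((small_total hPo).2 h)]
        refine ih _ hPo h hsub.2 hne.2 hpw.2 fun o' ho' => ?_
        exact disjoint_union_left.2 ⟨hdis.2 o' ho', hpw.1 o' ho'⟩
      · rw [if_neg fun h' => h ((small_total hPo).1 h'), card_eq_zero, eq_empty_iff_forall_notMem]
        intro E hE
        rw [mem_between] at hE
        exact h ((mem_allFree.1 hE.1).2.mono hE.2.1)
    · refine disjoint_left.2 fun E h1 h2 => ?_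
      rw [mem_between] at h1 h2
      obtain ⟨e, he⟩ := hne.1
      rcases h1.2.2.1 e (h2.2.1 (mem_union_right _ he)) with h | ⟨o', ho', h⟩
      · exact disjoint_left.1 hdis.1 h he
      · have hdis' := hpw.1 o' ho'
        exact disjoint_left.1 hdis' he h

/-! ### The action of the symmetric group -/

/-- The image of a hypergraph under a permutation of the vertices. -/
def move (σ : Equiv.Perm (Fin 7)) (E : Finset (Finset (Fin 7))) : Finset (Finset (Fin 7)) :=
  E.image (image σ)

theorem mem_move {σ : Equiv.Perm (Fin 7)} {E : Finset (Finset (Fin 7))} {s : Finset (Fin 7)} :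
    s.image σ ∈ move σ E ↔ s ∈ E :=
  (image_injective σ.injective).mem_finset_image

theorem move_one (E : Finset (Finset (Fin 7))) : move 1 E = E := by
  have : image (⇑(1 : Equiv.Perm (Fin 7))) = id := by
    funext s
    exact image_id
  rw [move, this, image_id]

theorem move_mul (σ τ : Equiv.Perm (Fin 7)) (E : Finset (Finset (Fin 7))) :
    move (σ * τ) E = move σ (move τ E) := by
  simp only [move, image_image]
  congr 1
  funext s
  simp [image_image, Equiv.Perm.coe_mul]

theorem move_injective (σ : Equiv.Perm (Fin 7)) : Function.Injective (move σ) :=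
  image_injective (image_injective σ.injective)

theorem move_mem_allFree (σ : Equiv.Perm (Fin 7)) {E : Finset (Finset (Fin 7))}
    (hE : E ∈ allFree) : move σ E ∈ allFree := by
  rw [mem_allFree] at hE ⊢
  constructor
  · intro s hs
    obtain ⟨e, he, rfl⟩ := mem_image.1 hs
    rw [mem_triples, card_image_of_injective _ σ.injective]
    exact mem_triples.1 (hE.1 he)
  · intro q hq
    have hq' : (q.image σ.symm).card = 4 := by
      rw [card_image_of_injective _ σ.symm.injective, hq]
    refine lt_of_eq_of_lt ?_ (hE.2 _ hq')
    rw [move, filter_image, card_image_of_injective _ (image_injective σ.injective)]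
    congr 1
    ext e
    simp only [mem_filter, and_congr_right_iff]
    intro _
    constructor
    · intro h x hx
      exact mem_image.2 ⟨σ x, h (mem_image_of_mem _ hx), by simp⟩
    · intro h
      rw [image_subset_iff]
      intro x hx
      obtain ⟨y, hy, rfl⟩ := mem_image.1 (h hx)
      simpa using hy

theorem K4minusFree7.mem_allFree (E : K4minusFree7) : E.1 ∈ allFree :=
  _root_.mem_allFree.2 ⟨fun e he => mem_triples.2 (E.2.1 e he), E.2.2⟩

/-- The `K₄⁻`-free hypergraph with a given edge set. -/
def ofAllFree {E : Finset (Finset (Fin 7))} (h : E ∈ allFree) : K4minusFree7 :=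
  ⟨E, fun _ he => mem_triples.1 ((mem_allFree.1 h).1 he), (mem_allFree.1 h).2⟩

instance : MulAction (Equiv.Perm (Fin 7)) K4minusFree7 where
  smul σ E := ofAllFree (move_mem_allFree σ E.mem_allFree)
  one_smul E := Subtype.ext (move_one E.1)
  mul_smul σ τ E := Subtype.ext (move_mul σ τ E.1)

theorem smul_val (σ : Equiv.Perm (Fin 7)) (E : K4minusFree7) : (σ • E).1 = move σ E.1 := rfl

instance : Finite K4minusFree7 := inferInstanceAs (Finite (Subtype _))

theorem isoHG7_iff (E F : K4minusFree7) : IsoHG7 E F ↔ ∃ σ : Equiv.Perm (Fin 7), σ • E = F := by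
  refine exists_congr fun σ => ⟨fun h => Subtype.ext ?_, ?_⟩
  · ext s
    have hs : (s.image σ.symm).image σ = s := by simp [image_image]
    rw [smul_val, ← hs, mem_move, h, hs]
  · rintro rfl s
    exact mem_move.symm

/-- The number of hypergraphs fixed by `σ`. -/
noncomputable def fixCount (σ : Equiv.Perm (Fin 7)) : ℕ :=
  Nat.card (MulAction.fixedBy K4minusFree7 σ)

/-- Burnside's lemma for the isomorphism classes. -/
theorem sum_fixCount : ∑ σ, fixCount σ = Nat.card (Quot IsoHG7) * 5040 := by
  classical
  have : Fintype K4minusFree7 := Fintype.ofFinite _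
  have e : Nat.card (Quot IsoHG7) =
      Nat.card (MulAction.orbitRel.Quotient (Equiv.Perm (Fin 7)) K4minusFree7) := by
    refine Nat.card_congr (Quot.congrRight fun E F => ?_)
    rw [isoHG7_iff]
    change _ ↔ E ∈ MulAction.orbit (Equiv.Perm (Fin 7)) F
    rw [← MulAction.mem_orbit_symm]
    rfl
  have h := MulAction.sum_card_fixedBy_eq_card_orbits_mul_card_group
    (Equiv.Perm (Fin 7)) K4minusFree7
  rw [Fintype.card_perm, Fintype.card_fin, ← Nat.card_eq_fintype_card] at h
  rw [e, show (5040 : ℕ) = Nat.factorial 7 by decide]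
  refine Eq.trans ?_ h
  exact sum_congr rfl fun σ _ => Nat.card_eq_fintype_card

theorem fixCount_congr {σ τ : Equiv.Perm (Fin 7)} (h : σ.cycleType = τ.cycleType) :
    fixCount σ = fixCount τ := by
  obtain ⟨g, rfl⟩ := isConj_iff.1 (Equiv.Perm.isConj_iff_cycleType_eq.2 h)
  rw [fixCount, fixCount, ← MulAction.smul_fixedBy]
  exact (Set.natCard_smul_set g _).symm

theorem fixCount_eq_card (σ : Equiv.Perm (Fin 7)) (Y : Finset (Finset (Finset (Fin 7))))
    (hY : ∀ E, E ∈ Y ↔ E ∈ allFree ∧ move σ E = E) : fixCount σ = Y.card := by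
  rw [fixCount, ← Nat.card_eq_finsetCard]
  exact Nat.card_congr
    { toFun := fun E => ⟨E.1.1, (hY _).2 ⟨E.1.mem_allFree, congrArg Subtype.val E.2⟩⟩
      invFun := fun E => ⟨ofAllFree ((hY _).1 E.2).1, Subtype.ext ((hY _).1 E.2).2⟩
      left_inv := fun _ => rfl
      right_inv := fun _ => rfl }

/-! ### Hypergraphs fixed by a permutation -/

/-- `bs` lists the orbits of `σ` on triples, each in cyclic order; a fixed hypergraph is a union
of orbits. -/
theorem fixCount_of_blocks (σ : Equiv.Perm (Fin 7)) (bs : List (List (Finset (Fin 7))))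
    (hmem : ∀ e, e ∈ bs.flatten ↔ e.card = 3) (hnd : bs.flatten.Nodup)
    (hrot : ∀ b ∈ bs, b.map (image σ) = b.rotate 1) (hne : ∀ b ∈ bs, b ≠ []) :
    fixCount σ = countExt (bs.map fun b => (b.map weight).sum + 1) 0 := by
  rw [List.nodup_flatten] at hnd
  have hcard : ∀ b ∈ bs, ∀ e ∈ b, e.card = 3 := fun b hb e he =>
    (hmem e).1 (List.mem_flatten.2 ⟨b, hb, he⟩)
  rw [fixCount_eq_card σ (between (bs.map List.toFinset) ∅), card_between, List.map_map]
  · congr 1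
    refine List.map_congr_left fun b hb => ?_
    simp only [Function.comp_apply, total, List.sum_toFinset _ (hnd.1 b hb)]
  · exact empty_subset _
  · intro q _
    simp
  · rintro o ho e he
    obtain ⟨b, hb, rfl⟩ := List.mem_map.1 ho
    exact mem_triples.2 (hcard b hb e (List.mem_toFinset.1 he))
  · rintro o ho
    obtain ⟨b, hb, rfl⟩ := List.mem_map.1 ho
    exact List.toFinset_nonempty_iff _ |>.2 (hne b hb)
  · rw [List.pairwise_map]
    exact hnd.2.imp fun h => disjoint_left.2 fun e h1 h2 =>
      h (List.mem_toFinset.1 h1) (List.mem_toFinset.1 h2)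
  · exact fun o _ => disjoint_empty_left o
  · intro E
    rw [mem_between]
    refine and_congr_right fun hE => ⟨?_, ?_⟩
    · rintro ⟨_, hE', hos⟩
      refine eq_of_subset_of_card_le ?_
        (card_image_of_injective _ (image_injective σ.injective)).ge
      intro s hs
      obtain ⟨e, he, rfl⟩ := mem_image.1 hs
      obtain h | ⟨o, ho, heo⟩ := hE' e he
      · simp at h
      · obtain ⟨b, hb, rfl⟩ := List.mem_map.1 ho
        rcases hos _ ho with h | h
        · refine h (List.mem_toFinset.2 ?_)
          rw [← List.mem_rotate (n := 1), ← hrot b hb]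
          exact List.mem_map_of_mem (List.mem_toFinset.1 heo)
        · exact absurd he (disjoint_left.1 h heo)
    · intro hfix
      refine ⟨empty_subset _, fun e he => Or.inr ?_, fun o ho => ?_⟩
      · obtain ⟨b, hb, h⟩ :=
          List.mem_flatten.1 ((hmem e).2 (mem_triples.1 ((mem_allFree.1 hE).1 he)))
        exact ⟨_, List.mem_map_of_mem hb, List.mem_toFinset.2 h⟩
      · obtain ⟨b, hb, rfl⟩ := List.mem_map.1 ho
        have hstep : ∀ s : Finset (Fin 7), (s.image σ ∈ E) = (s ∈ E) := fun s => by
          conv_lhs => rw [← hfix]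
          exact propext mem_move
        -- Membership in `E` is the same for consecutive triples of the orbit.
        have hconst : (b.map (· ∈ E)).rotate 1 = b.map (· ∈ E) := by
          rw [← List.map_rotate, ← hrot b hb, List.map_map]
          exact List.map_congr_left fun s _ => hstep s
        obtain ⟨a, ha⟩ := List.rotate_one_eq_self_iff_eq_replicate.1 hconst
        have hall : ∀ e ∈ b, (e ∈ E) = a := fun e he =>
          List.eq_of_mem_replicate (ha ▸ List.mem_map_of_mem (f := (· ∈ E)) he)
        by_cases h : a
        · exact Or.inl fun e he => (hall e (List.mem_toFinset.1 he)).symm ▸ h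
        · exact Or.inr (disjoint_left.2 fun e he heE =>
            h (hall e (List.mem_toFinset.1 he) ▸ heE))

/-- As `fixCount_of_blocks`, with the triples given by their masks, for a whole class. -/
theorem fixCount_of_check {m : Multiset ℕ} {n : ℕ} (σ : Equiv.Perm (Fin 7))
    (bs : List (List ℕ)) (ds : List ℕ) (hσ : σ.cycleType = m)
    (hperm : bs.flatten.Perm triMasks)
    (hrot : ∀ b ∈ bs, b ≠ [] ∧ List.Forall₂ (Maps σ) b (b.rotate 1))
    (hds : bs.map (fun b => (b.map wt).sum + 1) = ds) (hn : countExt ds 0 = n) :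
    ∀ τ : Equiv.Perm (Fin 7), τ.cycleType = m → fixCount τ = n := by
  intro τ hτ
  rw [triMasks_eq] at hperm
  have hp : (bs.map (List.map dec)).flatten.Perm ((masks 3).map dec) := by
    rw [← List.map_flatten]
    exact hperm.map dec
  rw [fixCount_congr (hτ.trans hσ.symm), fixCount_of_blocks σ (bs.map (List.map dec)), ← hn, ← hds,
    List.map_map]
  · refine congrArg (countExt · 0) (List.map_congr_left fun b hb => ?_)
    rw [Function.comp_apply, List.map_map]
    refine congrArg (fun l => List.sum l + 1) (List.map_congr_left fun i hi => ?_)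
    exact weight_dec (lt_of_mem_masks (hperm.mem_iff.1 (List.mem_flatten.2 ⟨b, hb, hi⟩)))
  · exact fun e => hp.mem_iff.trans (mem_map_masks 3 e)
  · exact hp.nodup_iff.2 (nodup_map_masks 3)
  · intro b hb
    obtain ⟨b, hb', rfl⟩ := List.mem_map.1 hb
    rw [List.map_map, ← List.map_rotate, ← List.forall₂_eq_eq_eq, List.forall₂_map_left_iff,
      List.forall₂_map_right_iff]
    exact (hrot b hb').2.imp fun _ _ h => h.image_dec
  · intro b hb
    obtain ⟨b, hb', rfl⟩ := List.mem_map.1 hb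
    simpa using (hrot b hb').1

open Equiv

/-! ### The fourteen nontrivial cycle types

In each theorem, the first list contains the orbits on triples of a permutation of the given type,
and the second list the packed counts of these orbits, increased by one. -/

theorem fixCount_7 :
    ∀ τ : Perm (Fin 7), τ.cycleType = {7} → fixCount τ = 10 :=
  fixCount_of_check (c[0, 1, 2, 3, 4, 5, 6])
    [[112, 97, 67, 7, 14, 28, 56], [104, 81, 35, 70, 13, 26, 52], [100, 73, 19, 38, 76, 25, 50],
     [98, 69, 11, 22, 44, 88, 49], [84, 41, 82, 37, 74, 21, 42]]
    [10874085030407741772066856149515, 5715745703003819829749304562242,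
     715553828324904345888933053065, 5161129529544515170462012280906,
     713382598606642223486895424009]
    (by decide +kernel) (by decide +kernel) (by decide +kernel) (by decide +kernel)
    (by decide +kernel)

theorem fixCount_6 :
    ∀ τ : Perm (Fin 7), τ.cycleType = {6} → fixCount τ = 24 :=
  fixCount_of_check (c[0, 1, 2, 3, 4, 5])
    [[112, 97, 67, 70, 76, 88], [104, 81, 98, 69, 74, 84], [100, 73, 82],
     [56, 49, 35, 7, 14, 28], [52, 41, 19, 38, 13, 26], [50, 37, 11, 22, 44, 25], [42, 21]]
    [10875325393694359279943886569473, 5795283657484033018465099972609,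
     714313466237325192752497950721, 5080505963728517053080341389835,
     633847061369309946455022408330, 80466404868015256367337345674, 154742506063594589815833097]
    (by decide +kernel) (by decide +kernel) (by decide +kernel) (by decide +kernel)
    (by decide +kernel)

theorem fixCount_5_2 :
    ∀ τ : Perm (Fin 7), τ.cycleType = {5, 2} → fixCount τ = 10 :=
  fixCount_of_check (c[0, 1, 2, 3, 4] * c[5, 6])
    [[112, 97, 98, 100, 104], [88, 49, 67, 38, 76, 56, 81, 35, 70, 44],
     [84, 41, 82, 37, 74, 52, 73, 50, 69, 42], [28, 25, 19, 7, 14], [26, 21, 11, 22, 13]]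
    [11589948334149831138553525960705, 10163492643987420135891927367681,
     1426455706353381801071810740225, 4796315628402357871763, 600674637734379529363]
    (by decide +kernel) (by decide +kernel) (by decide +kernel) (by decide +kernel)
    (by decide +kernel)

theorem fixCount_5 :
    ∀ τ : Perm (Fin 7), τ.cycleType = {5} → fixCount τ = 20 :=
  fixCount_of_check (c[0, 1, 2, 3, 4])
    [[112, 97, 98, 100, 104], [88, 81, 67, 70, 76], [84, 73, 82, 69, 74], [56, 49, 35, 38, 44],
     [52, 41, 50, 37, 42], [28, 25, 19, 7, 14], [26, 21, 11, 22, 13]]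
    [11589948334149831138553525960705, 5081746327090363005722255425537,
     713227856175523346885703106561, 5081746316897057130169671942145,
     713227850177858454186107633665, 4796315628402357871763, 600674637734379529363]
    (by decide +kernel) (by decide +kernel) (by decide +kernel) (by decide +kernel)
    (by decide +kernel)

theorem fixCount_4_3 :
    ∀ τ : Perm (Fin 7), τ.cycleType = {4, 3} → fixCount τ = 6 :=
  fixCount_of_check (c[0, 1, 2, 3] * c[4, 5, 6])
    [[112], [104, 81, 50, 100, 88, 49, 98, 84, 56, 97, 82, 52],
     [76, 25, 35, 70, 28, 41, 67, 22, 44, 73, 19, 38], [74, 21, 42, 69, 26, 37], [14, 13, 11, 7]]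
    [5793559383855579686527901368321, 17383507728799350191639519821825,
     2519486577023680559601755281, 310090655649200069287383625, 20582857691140685]
    (by decide +kernel) (by decide +kernel) (by decide +kernel) (by decide +kernel)
    (by decide +kernel)

theorem fixCount_4_2 :
    ∀ τ : Perm (Fin 7), τ.cycleType = {4, 2} → fixCount τ = 125 :=
  fixCount_of_check (c[0, 1, 2, 3] * c[4, 5])
    [[112], [104, 81, 98, 84], [100, 88, 97, 82], [76, 73, 67, 70], [74, 69], [56, 49, 50, 52],
     [44, 25, 35, 22], [42, 21], [41, 19, 38, 28], [37, 26], [14, 13, 11, 7]]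
    [5793559383855579686527901368321, 5795128612156198127552459440129,
     5794819732787572367506519621633, 1259743288532418661963530241, 155045327834890912640532481,
     5793559383855579696580540760065, 1237977901227596039263130185, 154742506063594589815833097,
     21765387263665858375094857, 302821750714566831018049, 20582857691140685]
    (by decide +kernel) (by decide +kernel) (by decide +kernel) (by decide +kernel)
    (by decide +kernel)

theorem fixCount_4 :
    ∀ τ : Perm (Fin 7), τ.cycleType = {4} → fixCount τ = 75 :=
  fixCount_of_check (c[0, 1, 2, 3])
    [[112], [104, 97, 98, 100], [88, 81, 82, 84], [76, 73, 67, 70], [74, 69], [56, 49, 50, 52],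
     [44, 41, 35, 38], [42, 37], [28, 25, 19, 22], [26, 21], [14, 13, 11, 7]]
    [5793559383855579686527901368321, 5796388950294251452025624592385,
     5793559394649519043033354469377, 1259743288532418661963530241, 155045327834890912640532481,
     5793559383855579696580540760065, 1259738482970311032734023681, 155044736365576742504792065,
     4805520950864904201361, 591448732414142059081, 20582857691140685]
    (by decide +kernel) (by decide +kernel) (by decide +kernel) (by decide +kernel)
    (by decide +kernel)

theorem fixCount_3_3 :
    ∀ τ : Perm (Fin 7), τ.cycleType = {3, 3} → fixCount τ = 476 :=
  fixCount_of_check (c[0, 1, 2] * c[3, 4, 5])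
    [[112, 104, 88], [100, 73, 82], [98, 76, 81], [97, 74, 84], [70, 69, 67], [56], [52, 41, 26],
     [50, 44, 25], [49, 42, 28], [38, 13, 19], [37, 11, 22], [35, 14, 21], [7]]
    [15936176216425174054900772896769, 714313466237325192752497950721,
     90526825800785286872998871041, 643903251079865898806456352769, 2757872567057828758421505,
     5070602400912917611003334623233, 633844643517524350200040394817,
     80466102627336699188546110017, 10058267541560202620947403265, 2417851785596254982013514,
     302240678557178791235658, 37780102798861503074826, 35184372121610]
    (by decide +kernel) (by decide +kernel) (by decide +kernel) (by decide +kernel)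
    (by decide +kernel)

theorem fixCount_3_2_2 :
    ∀ τ : Perm (Fin 7), τ.cycleType = {3, 2, 2} → fixCount τ = 58 :=
  fixCount_of_check (c[0, 1, 2] * c[3, 4] * c[5, 6])
    [[112, 104], [100, 97, 98], [88, 56], [84, 41, 82, 44, 81, 42], [76, 49, 74, 52, 73, 50],
     [70, 37, 67, 38, 69, 35], [28, 25, 26], [22, 13, 19, 14, 21, 11], [7]]
    [10865573810125807179390771003393, 724374524024023959162754957313,
     10141204807212284486513336516609, 724369013707462059415969464321,
     724369013686462337323051778049, 5515734593053711380348929, 5386449274539710882945,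
     10540956412654396572, 35184372121610]
    (by decide +kernel) (by decide +kernel) (by decide +kernel) (by decide +kernel)
    (by decide +kernel)

theorem fixCount_3_2 :
    ∀ τ : Perm (Fin 7), τ.cycleType = {3, 2} → fixCount τ = 62 :=
  fixCount_of_check (c[0, 1, 2] * c[3, 4])
    [[112, 104], [100, 97, 98], [88], [84, 73, 82, 76, 81, 74], [70, 69, 67], [56],
     [52, 41, 50, 44, 49, 42], [38, 37, 35], [28, 25, 26], [22, 13, 19, 14, 21, 11], [7]]
    [10865573810125807179390771003393, 724374524024023959162754957313,
     5070602406299366875510001893377, 724369019093952419269198217217, 2757872567057828758421505,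
     5070602400912917611003334623233, 724369008299971977469823025153, 2757862025995882621927425,
     5386449274539710882945, 10540956412654396572, 35184372121610]
    (by decide +kernel) (by decide +kernel) (by decide +kernel) (by decide +kernel)
    (by decide +kernel)

theorem fixCount_3 :
    ∀ τ : Perm (Fin 7), τ.cycleType = {3} → fixCount τ = 506 :=
  fixCount_of_check (c[0, 1, 2])
    [[112], [104], [100, 97, 98], [88], [84, 81, 82], [76, 73, 74], [70, 69, 67], [56],
     [52, 49, 50], [44, 41, 42], [38, 37, 35], [28, 25, 26], [22, 21, 19], [14, 13, 11], [7]]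
    [5793559383855579686527901368321, 5072014426270227492862869635073,
     724374524024023959162754957313, 5070602406299366875510001893377,
     722956988350152167523352576001, 1412030743800251745845641217, 2757872567057828758421505,
     5070602400912917611003334623233, 722956982942662085577206136833,
     1412025357309891892616888321, 2757862025995882621927425, 5386449274539710882945,
     10520408739335377497, 20547673319019076, 35184372121610]
    (by decide +kernel) (by decide +kernel) (by decide +kernel) (by decide +kernel)
    (by decide +kernel)

theorem fixCount_2_2_2 :
    ∀ τ : Perm (Fin 7), τ.cycleType = {2, 2, 2} → fixCount τ = 13629 :=
  fixCount_of_check (c[0, 1] * c[2, 3] * c[4, 5])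
    [[112], [104, 84], [100, 88], [98, 81], [97, 82], [76], [74, 69], [73, 70], [67], [56, 52],
     [50, 49], [44, 28], [42, 21], [41, 22], [38, 25], [37, 26], [35, 19], [14, 13], [11, 7]]
    [5793559383855579686527901368321, 5705839731117084970022328074241,
     5705668366535861089448895709185, 89288881039113157530131365889,
     89151366251711278057623912449, 1237944761672129342867505153, 155045327834890912640532481,
     21760747783994514509660161, 37779076294804586364929, 5704427701027032316159396413441,
     89131682828547380421144346625, 1237944761651871940656239105, 154742506063594589815833097,
     19342822337206180961849353, 2417925426205630513840705, 302821750714566831018049,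
     37779075978145506295881, 20266198342046211, 316659349094475]
    (by decide +kernel) (by decide +kernel) (by decide +kernel) (by decide +kernel)
    (by decide +kernel)

theorem fixCount_2_2 :
    ∀ τ : Perm (Fin 7), τ.cycleType = {2, 2} → fixCount τ = 20659 :=
  fixCount_of_check (c[0, 1] * c[2, 3])
    [[112], [104, 100], [98, 97], [88, 84], [82, 81], [76], [74, 69], [73, 70], [67], [56, 52],
     [50, 49], [44], [42, 37], [41, 38], [35], [28], [26, 21], [25, 22], [19], [14, 13], [11, 7]]
    [5793559383855579686527901368321, 5707080386506721706801763450881,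
     89308563787529745223861141505, 5704427711146224352669460332545,
     89131683503294690363894136833, 1237944761672129342867505153, 155045327834890912640532481,
     21760747783994514509660161, 37779076294804586364929, 5704427701027032316159396413441,
     89131682828547380421144346625, 1237940039285384672964509697, 155044736365576742504792065,
     21760664753063402473291777, 37778931862957296222209, 4722366487267691729409,
     591448732414142059081, 83010348409002398281, 144115188210073673, 20266198342046211,
     316659349094475]
    (by decide +kernel) (by decide +kernel) (by decide +kernel) (by decide +kernel)
    (by decide +kernel)

theorem fixCount_2 :
    ∀ τ : Perm (Fin 7), τ.cycleType = {2} → fixCount τ = 87185 :=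
  fixCount_of_check (c[0, 1])
    [[112], [104], [100], [98, 97], [88], [84], [82, 81], [76], [74, 73], [70, 69], [67], [56],
     [52], [50, 49], [44], [42, 41], [38, 37], [35], [28], [26, 25], [22, 21], [19], [14, 13],
     [11], [7]]
    [5793559383855579686527901368321, 5072014426270227492862869635073,
     635065960236494213938893815809, 89308563787529745223861141505,
     5070602406299366875510001893377, 633825304846857477159458439169,
     89131683503294690363894136833, 1237944761672129342867505153, 174085982128122402978136065,
     2720093490763024172056577, 37779076294804586364929, 5070602400912917611003334623233,
     633825300114114705156061790209, 89131682828547380421144346625, 1237940039285384672964509697,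
     174085318024507219652378625, 2720083094132925325705217, 37778931862957296222209,
     4722366487267691729409, 664082787272019153537, 10376293551125303825, 144115188210073673,
     20266198342046211, 281474976972866, 35184372121610]
    (by decide +kernel) (by decide +kernel) (by decide +kernel) (by decide +kernel)
    (by decide +kernel)

/-! ### All hypergraphs, by the link of the last vertex -/

/-- The list `D` consists of distinct masks of triples. -/
def Good (D : List ℕ) : Prop := D.Nodup ∧ ∀ t ∈ D, t ∈ triMasks

theorem Good.of_append {D ts : List ℕ} (h : Good (ts ++ D)) : Good D :=
  ⟨h.1.of_append_right, fun t ht => h.2 t (List.mem_append_right _ ht)⟩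

theorem Good.tail {t : ℕ} {D : List ℕ} (h : Good (t :: D)) : Good D := h.of_append (ts := [t])

theorem lt_of_mem_triMasks {t : ℕ} (ht : t ∈ triMasks) : t < 128 :=
  lt_of_mem_masks (triMasks_eq ▸ ht)

theorem dec_mem_triples {t : ℕ} (ht : t ∈ triMasks) : dec t ∈ triples := by
  rw [mem_triples, ← mem_map_masks, ← triMasks_eq]
  exact List.mem_map_of_mem ht

/-- The number whose binary digits, lowest first, record which triples of `D` lie in `E`. -/
def enc (D : List ℕ) (E : Finset (Finset (Fin 7))) : ℕ :=
  D.foldr (fun t g => 2 * g + if dec t ∈ E then 1 else 0) 0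

theorem enc_cons (t : ℕ) (D : List ℕ) (E : Finset (Finset (Fin 7))) :
    enc (t :: D) E = 2 * enc D E + if dec t ∈ E then 1 else 0 := rfl

theorem enc_eq_iff {D : List ℕ} {E F : Finset (Finset (Fin 7))} :
    enc D E = enc D F ↔ ∀ t ∈ D, dec t ∈ E ↔ dec t ∈ F := by
  induction D with
  | nil => simp [enc]
  | cons t D ih =>
    rw [List.forall_mem_cons, ← ih, enc_cons, enc_cons]
    by_cases h1 : dec t ∈ E <;> by_cases h2 : dec t ∈ F <;> simp [h1, h2] <;> omega

theorem enc_div_pow (D : List ℕ) (E : Finset (Finset (Fin 7))) (hE : ∅ ∉ E) (i : ℕ) :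
    enc D E / 2 ^ i % 2 = if dec (D.getD i 0) ∈ E then 1 else 0 := by
  have h0 : dec 0 ∉ E := by
    have : dec 0 = ∅ := by simp [dec]
    rwa [this]
  induction D generalizing i with
  | nil => simp [enc, h0]
  | cons t D ih =>
    rw [enc_cons]
    cases i with
    | zero =>
      rw [List.getD_cons_zero]
      split_ifs <;> omega
    | succ i =>
      rw [List.getD_cons_succ, ← ih i, pow_succ', ← Nat.div_div_eq_div_mul]
      congr 2
      split_ifs <;> omega

theorem empty_notMem {E : Finset (Finset (Fin 7))} (hE : E ∈ allFree) : ∅ ∉ E := fun h => by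
  simpa using mem_triples.1 ((mem_allFree.1 hE).1 h)

/-- The number of hypergraphs whose part inside `D` is encoded by `g`. -/
noncomputable def numWith (D : List ℕ) (g : ℕ) : ℕ := (allFree.filter fun E => enc D E = g).card

/-- The weighted sum over a list of encodings with multiplicities. -/
noncomputable def wsum (D : List ℕ) (W : List (ℕ × ℕ)) : ℕ := (W.map fun p => p.2 * numWith D p.1).sum

theorem wsum_cons (D : List ℕ) (p : ℕ × ℕ) (W : List (ℕ × ℕ)) :
    wsum D (p :: W) = p.2 * numWith D p.1 + wsum D W := by simp [wsum]

theorem wsum_nil_one : wsum [] [(0, 1)] = allFree.card := by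
  simp [wsum, numWith, enc]

theorem numWith_split (t : ℕ) (D : List ℕ) (g : ℕ) :
    numWith D g = numWith (t :: D) (2 * g) + numWith (t :: D) (2 * g + 1) := by
  rw [numWith, numWith, numWith, ← card_union_of_disjoint, ← filter_or]
  · congr 1
    refine filter_congr fun E _ => ?_
    rw [enc_cons]
    split_ifs <;> omega
  · refine disjoint_filter.2 fun E _ h1 h2 => ?_
    omega

/-- The packed counts of the subset of `D` encoded by `g`. -/
def state (D : List ℕ) : ℕ → ℕ :=
  D.foldr (fun t ih g => Nat.add (cond (Nat.beq (Nat.mod g 2) 1) (wt t) 0) (ih (Nat.div g 2)))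
    fun _ => 0

theorem state_cons (t : ℕ) (D : List ℕ) (g : ℕ) :
    state (t :: D) g = (if g % 2 = 1 then wt t else 0) + state D (g / 2) := by
  have : state (t :: D) g =
    (cond (Nat.beq (Nat.mod g 2) 1) (wt t) 0) + state D (g / 2) := rfl
  rw [this]
  congr 1
  split_ifs with h1
  · rw [show Nat.beq (Nat.mod g 2) 1 = true from Nat.beq_eq.mpr h1]; rfl
  · rw [show Nat.beq (Nat.mod g 2) 1 = false from
      Bool.eq_false_iff.2 fun h' => h1 (Nat.eq_of_beq_eq_true h')]
    rfl

/-- Every `g < 2 ^ D.length` encodes a subset of `D`, with packed counts `state D g`. -/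
theorem exists_enc {D : List ℕ} (hD : Good D) {g : ℕ} (hg : g < 2 ^ D.length) :
    ∃ P : Finset (Finset (Fin 7)), (∀ e ∈ P, ∃ t ∈ D, dec t = e) ∧ enc D P = g ∧
      total P = state D g := by
  induction D generalizing g with
  | nil =>
    refine ⟨∅, by simp, ?_, rfl⟩
    simp at hg
    simp [enc, hg]
  | cons t D ih =>
    obtain ⟨P, hP, he, ht⟩ := ih hD.tail (g := g / 2) (by
      rw [List.length_cons, pow_succ] at hg
      omega)
    have htP : dec t ∉ P := by
      intro h'
      obtain ⟨s, hs, hst⟩ := hP _ h'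
      have := dec_inj (lt_of_mem_triMasks (hD.2 s (List.mem_cons_of_mem _ hs)))
        (lt_of_mem_triMasks (hD.2 t List.mem_cons_self)) hst
      exact (List.nodup_cons.1 hD.1).1 (this ▸ hs)
    have hw := weight_dec (lt_of_mem_triMasks (hD.2 t List.mem_cons_self))
    rw [state_cons]
    by_cases hodd : g % 2 = 1
    · refine ⟨insert (dec t) P, ?_, ?_, ?_⟩
      · intro e he'
        rcases mem_insert.1 he' with rfl | he'
        · exact ⟨t, List.mem_cons_self, rfl⟩
        · obtain ⟨s, hs, rfl⟩ := hP e he'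
          exact ⟨s, List.mem_cons_of_mem _ hs, rfl⟩
      · have : enc D (insert (dec t) P) = enc D P := by
          refine enc_eq_iff.2 fun s hs => ?_
          rw [mem_insert, or_iff_right]
          intro hst
          have := dec_inj (lt_of_mem_triMasks (hD.2 s (List.mem_cons_of_mem _ hs)))
            (lt_of_mem_triMasks (hD.2 t List.mem_cons_self)) hst
          exact (List.nodup_cons.1 hD.1).1 (this ▸ hs)
        rw [enc_cons, this, he, if_pos (mem_insert_self _ _)]
        omega
      · rw [total, sum_insert htP, hw, if_pos hodd, ← ht, total]
    · refine ⟨P, ?_, ?_, ?_⟩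
      · intro e he'
        obtain ⟨s, hs, rfl⟩ := hP e he'
        exact ⟨s, List.mem_cons_of_mem _ hs, rfl⟩
      · rw [enc_cons, he, if_neg htP]
        omega
      · rw [if_neg hodd, zero_add, ht]

theorem enc_lt (D : List ℕ) (E : Finset (Finset (Fin 7))) : enc D E < 2 ^ D.length := by
  induction D with
  | nil => simp [enc]
  | cons t D ih =>
    rw [enc_cons, List.length_cons, pow_succ]
    split_ifs <;> omega

theorem sub_triples_of_good {D : List ℕ} (hD : Good D) {P : Finset (Finset (Fin 7))}
    (hP : ∀ e ∈ P, ∃ t ∈ D, dec t = e) : P ⊆ triples := by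
  intro e he
  obtain ⟨t, ht, rfl⟩ := hP e he
  exact dec_mem_triples (hD.2 t ht)

theorem numWith_eq_zero {D : List ℕ} (hD : Good D) {g : ℕ} (hs : small (state D g) = false) :
    numWith D g = 0 := by
  rw [numWith, card_eq_zero, filter_eq_empty_iff]
  rintro E hE rfl
  obtain ⟨P, hP, he, ht⟩ := exists_enc hD (enc_lt D E)
  rw [← ht] at hs
  refine (Bool.eq_false_iff.1 hs) ((small_total (sub_triples_of_good hD hP)).2
    ((mem_allFree.1 hE).2.mono fun e heP => ?_))
  obtain ⟨t, htD, rfl⟩ := hP e heP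
  exact (enc_eq_iff.1 he t htD).1 heP

/-- Splits every encoding according to a further triple and drops those with a full 4-set;
`D` already contains the new triple. -/
def grow (D : List ℕ) (W : List (ℕ × ℕ)) : List (ℕ × ℕ) :=
  (W.flatMap fun p => [(2 * p.1, p.2), (2 * p.1 + 1, p.2)]).filter fun p => small (state D p.1)

theorem wsum_grow {t : ℕ} {D : List ℕ} (hD : Good (t :: D)) (W : List (ℕ × ℕ)) :
    wsum (t :: D) (grow (t :: D) W) = wsum D W := by
  have hfilter : ∀ V : List (ℕ × ℕ),
      wsum (t :: D) (V.filter fun p => small (state (t :: D) p.1)) = wsum (t :: D) V := by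
    intro V
    induction V with
    | nil => rfl
    | cons p V ih =>
      cases hs : small (state (t :: D) p.1)
      · rw [List.filter_cons_of_neg (by simp [hs]), ih, wsum_cons, numWith_eq_zero hD hs, mul_zero,
          zero_add]
      · rw [List.filter_cons_of_pos (by simp [hs]), wsum_cons, wsum_cons, ih]
  rw [grow, hfilter]
  induction W with
  | nil => rfl
  | cons p W ih =>
    rw [List.flatMap_cons, List.cons_append, List.cons_append, List.nil_append, wsum_cons, wsum_cons,
      wsum_cons, ih, numWith_split t D p.1]
    ring

/-- Repeated `grow` along the list `ts` of new triples. -/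
def extend : List ℕ → List ℕ → List (ℕ × ℕ) → List (ℕ × ℕ)
  | [], _, W => W
  | t :: ts, D, W => extend ts (t :: D) (grow (t :: D) W)

theorem wsum_extend {ts D : List ℕ} (hD : Good (ts.reverse ++ D)) (W : List (ℕ × ℕ)) :
    wsum (ts.reverse ++ D) (extend ts D W) = wsum D W := by
  induction ts generalizing D W with
  | nil => rfl
  | cons t ts ih =>
    rw [List.reverse_cons, List.append_assoc, List.singleton_append] at hD ⊢
    rw [extend, ih hD, wsum_grow hD.of_append]

/-- The action on encodings of the relabelling `p` of the positions in `D`. -/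
def act (p : List ℕ) (g : ℕ) : ℕ :=
  p.foldr (fun i a => Nat.add (Nat.mul 2 a) (Nat.mod (Nat.shiftRight g i) 2)) 0

/-- The permutation `π` maps the triples of `D` to those at the positions `p` in `D`. -/
def Relabels (D : List ℕ) (π : Equiv.Perm (Fin 7)) (p : List ℕ) : Prop :=
  List.Forall₂ (fun t i => Maps π t (D.getD i 0)) D p

instance (D : List ℕ) (π : Equiv.Perm (Fin 7)) (p : List ℕ) : Decidable (Relabels D π p) :=
  inferInstanceAs (Decidable (List.Forall₂ _ _ _))

theorem act_enc {D : List ℕ} {π : Equiv.Perm (Fin 7)} {p : List ℕ} (hp : Relabels D π p)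
    {E : Finset (Finset (Fin 7))} (hE : ∅ ∉ E) : act p (enc D E) = enc D (move π⁻¹ E) := by
  have hmem : ∀ s, s ∈ move π⁻¹ E ↔ s.image π ∈ E := by
    intro s
    rw [← mem_move (σ := π), ← move_mul, mul_inv_cancel, move_one]
  have key : ∀ {D' p' : List ℕ}, List.Forall₂ (fun t i => Maps π t (D.getD i 0)) D' p' →
      act p' (enc D E) = enc D' (move π⁻¹ E) := by
    intro D' p' hf
    induction hf with
    | nil => rfl
    | @cons t i D' p' h1 _ ih =>
      rw [enc_cons, ← ih]
      simp only [hmem, h1.image_dec, ← enc_div_pow D E hE i, ← Nat.shiftRight_eq_div_pow]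
      rfl
  exact key hp

theorem numWith_le_act {D : List ℕ} {π : Equiv.Perm (Fin 7)} {p : List ℕ} (hp : Relabels D π p) (g : ℕ) :
    numWith D g ≤ numWith D (act p g) := by
  refine card_le_card_of_injOn (move π⁻¹) ?_ (move_injective _).injOn
  intro E hE
  rw [mem_coe, mem_filter] at hE ⊢
  exact ⟨move_mem_allFree _ hE.1, by rw [← act_enc hp (empty_notMem hE.1), hE.2]⟩

/-- `f n`, computed in the kernel with `n` evaluated first. -/
def force {α : Type} (n : ℕ) (f : ℕ → α) : α := Nat.rec (f 0) (fun k _ => f (k + 1)) n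

theorem force_eq {α : Type} (n : ℕ) (f : ℕ → α) : force n f = f n := by
  cases n <;> rfl

/-- Replaces `g` by `act p g` if that is smaller and `p` maps it back to `g`. -/
def step (p : List ℕ) (g : ℕ) : ℕ :=
  force g fun g => force (act p g) fun x =>
    cond (Nat.ble g x) g (cond (Nat.beq (act p x) g) x g)

theorem numWith_step {D : List ℕ} {π : Equiv.Perm (Fin 7)} {p : List ℕ} (hp : Relabels D π p) (g : ℕ) :
    numWith D (step p g) = numWith D g := by
  rw [step, force_eq, force_eq]
  cases Nat.ble g (act p g)
  · cases hb : Nat.beq (act p (act p g)) g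
    · rfl
    · have h1 := numWith_le_act hp g
      have h2 := numWith_le_act hp (act p g)
      rw [Nat.eq_of_beq_eq_true hb] at h2
      exact le_antisymm h2 h1
  · rfl

/-- Applies all relabellings in turn, `k` times over, to make an encoding smaller. -/
def canon (ps : List (List ℕ)) (k g : ℕ) : ℕ :=
  Nat.rec g (fun _ a => ps.foldl (fun a p => step p a) a) k

theorem numWith_canon {D : List ℕ} {πs : List (Equiv.Perm (Fin 7))} {ps : List (List ℕ)}
    (hps : List.Forall₂ (Relabels D) πs ps) (k g : ℕ) : numWith D (canon ps k g) = numWith D g := by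
  induction k with
  | zero => rfl
  | succ k ih =>
    rw [← ih]
    change numWith D (ps.foldl (fun a p => step p a) (canon ps k g)) = _
    generalize canon ps k g = a
    clear ih
    induction hps generalizing a with
    | nil => rfl
    | cons h1 _ ih' => rw [List.foldl_cons, ih', numWith_step h1]

/-- Adds an encoding with its multiplicity to a list, merging equal encodings. -/
def ins (g m : ℕ) (W : List (ℕ × ℕ)) : List (ℕ × ℕ) :=
  List.rec [(g, m)] (fun p W ih => cond (Nat.beq g p.1) ((g, Nat.add m p.2) :: W) (p :: ih)) W

theorem wsum_ins (D : List ℕ) (g m : ℕ) (W : List (ℕ × ℕ)) :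
    wsum D (ins g m W) = m * numWith D g + wsum D W := by
  induction W with
  | nil => simp [ins, wsum]
  | cons p W ih =>
    have : ins g m (p :: W) =
      cond (Nat.beq g p.1) ((g, Nat.add m p.2) :: W) (p :: ins g m W) := rfl
    rw [this]
    cases hb : Nat.beq g p.1
    · rw [cond_false, wsum_cons, wsum_cons, ih]
      ring
    · rw [cond_true, wsum_cons, wsum_cons, ← Nat.eq_of_beq_eq_true hb, Nat.add_eq]
      ring

/-- Replaces all encodings by canonical ones and merges. -/
def merge (ps : List (List ℕ)) (k : ℕ) (W : List (ℕ × ℕ)) : List (ℕ × ℕ) :=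
  W.foldr (fun p V => force (canon ps k p.1) fun g => ins g p.2 V) []

theorem wsum_merge {D : List ℕ} {πs : List (Equiv.Perm (Fin 7))} {ps : List (List ℕ)}
    (hps : List.Forall₂ (Relabels D) πs ps) (k : ℕ) (W : List (ℕ × ℕ)) :
    wsum D (merge ps k W) = wsum D W := by
  induction W with
  | nil => rfl
  | cons p W ih =>
    rw [wsum_cons, ← ih, ← numWith_canon hps k p.1, ← wsum_ins]
    rw [merge, List.foldr_cons, force_eq]
    rfl

theorem wsum_level {D D' : List ℕ} {W W' : List (ℕ × ℕ)} (ts : List ℕ)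
    (πs : List (Equiv.Perm (Fin 7))) (ps : List (List ℕ)) (k : ℕ) (hD' : ts.reverse ++ D = D')
    (hgood : Good D') (hps : List.Forall₂ (Relabels D') πs ps)
    (hW : merge ps k (extend ts D W) = W') : wsum D W = wsum D' W' := by
  subst hD'
  rw [← hW, wsum_merge hps, wsum_extend hgood]

/-- The weighted number of extensions by triples outside `D`. -/
def leafSum (D ds : List ℕ) (W : List (ℕ × ℕ)) : ℕ :=
  (W.map fun p => Nat.mul p.2 (countExt ds (state D p.1))).sum

theorem numWith_eq_countExt {D rest : List ℕ} (hperm : (D ++ rest).Perm triMasks) {g : ℕ}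
    (hg : g < 2 ^ D.length) (hs : small (state D g) = true) :
    numWith D g = countExt (rest.map fun t => wt t + 1) (state D g) := by
  have hgood : Good (D ++ rest) := by
    refine ⟨?_, fun t ht => hperm.mem_iff.1 ht⟩
    rw [hperm.nodup_iff, triMasks_eq]
    exact List.nodup_range.filter _
  have hD : Good D := ⟨hgood.1.of_append_left, fun t ht => hgood.2 t (List.mem_append_left _ ht)⟩
  have hR : Good rest := hgood.of_append
  have hne : ∀ t ∈ D, ∀ s ∈ rest, dec t ≠ dec s := by
    intro t ht s hs' hts
    have := dec_inj (lt_of_mem_triMasks (hD.2 t ht)) (lt_of_mem_triMasks (hR.2 s hs')) hts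
    exact (List.nodup_append.1 hgood.1).2.2 t ht s hs' this
  obtain ⟨P, hP, he, ht⟩ := exists_enc hD hg
  have hPt := sub_triples_of_good hD hP
  have hb := card_between (rest.map fun t => {dec t}) P hPt
    ((small_total hPt).1 (ht ▸ hs)) ?_ ?_ ?_ ?_
  · rw [List.map_map, ht] at hb
    rw [numWith]
    refine Eq.trans (congrArg card ?_)
      (hb.trans (congrArg (countExt · _) (List.map_congr_left fun t ht' => ?_)))
    · ext E
      rw [mem_filter, mem_between, ← he, enc_eq_iff]
      refine and_congr_right fun hE => ⟨fun hEP => ⟨?_, ?_, ?_⟩, ?_⟩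
      · intro e heP
        obtain ⟨t, htD, rfl⟩ := hP e heP
        exact (hEP t htD).2 heP
      · intro e heE
        have h3 : e ∈ (masks 3).map dec :=
          (mem_map_masks 3 e).2 (mem_triples.1 ((mem_allFree.1 hE).1 heE))
        obtain ⟨t, ht', rfl⟩ := List.mem_map.1 h3
        rw [← triMasks_eq, ← hperm.mem_iff, List.mem_append] at ht'
        rcases ht' with h' | h'
        · exact Or.inl ((hEP t h').1 heE)
        · exact Or.inr ⟨_, List.mem_map_of_mem h', mem_singleton_self _⟩
      · intro o ho
        obtain ⟨t, _, rfl⟩ := List.mem_map.1 ho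
        rw [singleton_subset_iff, disjoint_singleton_left]
        exact em _
      · rintro ⟨h1, h2, _⟩ t htD
        refine ⟨fun h' => ?_, fun h' => h1 h'⟩
        rcases h2 _ h' with h' | ⟨o, ho, h'⟩
        · exact h'
        · obtain ⟨s, hs', rfl⟩ := List.mem_map.1 ho
          exact absurd (mem_singleton.1 h') (hne t htD s hs')
    · rw [Function.comp_apply, total, sum_singleton, weight_dec (lt_of_mem_triMasks (hR.2 t ht'))]
  · intro o ho
    obtain ⟨t, ht', rfl⟩ := List.mem_map.1 ho
    exact singleton_subset_iff.2 (dec_mem_triples (hR.2 t ht'))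
  · intro o ho
    obtain ⟨t, _, rfl⟩ := List.mem_map.1 ho
    exact singleton_nonempty _
  · rw [List.pairwise_map]
    refine hR.1.imp_of_mem fun {s t} hs' ht' hst => ?_
    rw [disjoint_singleton]
    exact fun h' => hst (dec_inj (lt_of_mem_triMasks (hR.2 s hs'))
      (lt_of_mem_triMasks (hR.2 t ht')) h')
  · intro o ho
    obtain ⟨s, hs', rfl⟩ := List.mem_map.1 ho
    rw [disjoint_singleton_right]
    intro h'
    obtain ⟨t, ht', hts⟩ := hP _ h'
    exact hne t ht' s hs' hts

theorem wsum_eq_leafSum {D rest ds : List ℕ} {W : List (ℕ × ℕ)}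
    (hperm : (D ++ rest).Perm triMasks) (hds : (rest.map fun t => wt t + 1) = ds)
    (hW : ∀ p ∈ W, p.1 < 2 ^ D.length ∧ small (state D p.1) = true) :
    wsum D W = leafSum D ds W := by
  rw [wsum, leafSum]
  refine congrArg List.sum (List.map_congr_left fun p hp => ?_)
  rw [numWith_eq_countExt hperm (hW p hp).1 (hW p hp).2, hds]
  rfl

/-! ### The count of all hypergraphs -/

/-- The triples with vertex 6 and two vertices below 4. -/
def link4 : List ℕ := [76, 74, 73, 70, 69, 67]

/-- Representatives, with multiplicities, of the `K₄⁻`-free subsets of `link4`. -/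
def reps4 : List (ℕ × ℕ) :=
  [(7, 4), (30, 3), (13, 12), (3, 12), (12, 3), (1, 6), (0, 1)]

theorem wsum_link4 : wsum [] [(0, 1)] = wsum link4 reps4 :=
  wsum_level [67, 69, 70, 73, 74, 76]
    [c[2, 3], c[1, 2], c[0, 1]]
    [[0, 3, 4, 1, 2, 5], [1, 0, 2, 3, 5, 4], [0, 2, 1, 4, 3, 5]]
    3 (by decide +kernel) (by unfold Good; decide +kernel) (by decide +kernel) (by decide +kernel)

/-- The triples with vertex 6 and two vertices below 5. -/
def link5 : List ℕ := [88, 84, 82, 81, 76, 74, 73, 70, 69, 67]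

/-- Representatives, with multiplicities, of the `K₄⁻`-free subsets of `link5`. -/
def reps5 : List (ℕ × ℕ) :=
  [(15, 5), (7, 20), (3, 30), (1, 10), (0, 1), (29, 60), (28, 30), (21, 60), (20, 15), (58, 60),
   (62, 60), (54, 15), (220, 12), (126, 10)]

theorem wsum_link5 : wsum link4 reps4 = wsum link5 reps5 :=
  wsum_level [81, 82, 84, 88]
    [c[0, 1] * c[2, 3], c[1, 2] * c[3, 4], c[1, 2], c[0, 1] * c[3, 4], c[2, 3], c[0, 1],
     c[0, 2] * c[1, 3]]
    [[1, 0, 3, 2, 4, 8, 7, 6, 5, 9], [0, 5, 4, 6, 2, 1, 3, 7, 9, 8],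
     [0, 2, 1, 3, 5, 4, 6, 7, 9, 8], [0, 4, 6, 5, 1, 3, 2, 8, 7, 9],
     [1, 0, 2, 3, 4, 7, 8, 5, 6, 9], [0, 1, 3, 2, 4, 6, 5, 8, 7, 9],
     [2, 3, 0, 1, 9, 5, 7, 6, 8, 4]]
    3 (by decide +kernel) (by unfold Good; decide +kernel) (by decide +kernel) (by decide +kernel)

/-- The triples with vertex 6 and two vertices below 6. -/
def link6 : List ℕ := [112, 104, 100, 98, 97, 88, 84, 82, 81, 76, 74, 73, 70, 69, 67]

/-- A part of the list of representatives, with multiplicities, of the `K₄⁻`-free subsets of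
`link6`. -/
def reps6_0 : List (ℕ × ℕ) :=
  [(4060, 10), (2012, 90), (954, 180), (510, 15), (254, 120), (238, 60), (956, 180), (700, 360),
   (684, 72), (922, 360), (920, 45), (110, 360), (102, 45), (1884, 180), (693, 360), (246, 180),
   (126, 180), (1880, 60), (692, 360), (659, 360), (122, 360), (106, 360), (657, 180)]

/-- A part of the list of representatives, with multiplicities, of the `K₄⁻`-free subsets of
`link6`. -/
def reps6_1 : List (ℕ × ℕ) :=
  [(656, 15), (44, 180), (36, 45)]

/-- A part of the list of representatives, with multiplicities, of the `K₄⁻`-free subsets of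
`link6`. -/
def reps6_2 : List (ℕ × ℕ) :=
  [(45, 360), (37, 180), (120, 90), (60, 60), (121, 90), (61, 120), (31, 6), (15, 30), (7, 60)]

/-- A part of the list of representatives, with multiplicities, of the `K₄⁻`-free subsets of
`link6`. -/
def reps6_3 : List (ℕ × ℕ) :=
  [(3, 60), (1, 15), (0, 1)]

theorem wsum_link6 : wsum link5 reps5 = wsum link6 (reps6_0 ++ reps6_1 ++ reps6_2 ++ reps6_3) :=
  wsum_level [97, 98, 100, 104, 112]
    [c[1, 2] * c[3, 4], c[4, 5], c[0, 1] * c[2, 3], c[1, 2], c[2, 3], c[0, 1] * c[3, 4],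
     c[0, 1] * c[4, 5], c[0, 3] * c[1, 4] * c[2, 5], c[1, 2] * c[4, 5], c[0, 1] * c[3, 5]]
    [[1, 0, 3, 2, 4, 5, 10, 9, 11, 7, 6, 8, 12, 14, 13],
     [0, 5, 6, 7, 8, 1, 2, 3, 4, 9, 10, 11, 12, 13, 14],
     [0, 2, 1, 4, 3, 6, 5, 8, 7, 9, 13, 12, 11, 10, 14],
     [0, 1, 3, 2, 4, 5, 7, 6, 8, 10, 9, 11, 12, 14, 13],
     [0, 2, 1, 3, 4, 6, 5, 7, 8, 9, 12, 13, 10, 11, 14],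
     [1, 0, 2, 4, 3, 5, 9, 11, 10, 6, 8, 7, 13, 12, 14],
     [0, 5, 6, 8, 7, 1, 2, 4, 3, 9, 11, 10, 13, 12, 14],
     [12, 13, 2, 6, 9, 14, 3, 7, 10, 4, 8, 11, 0, 1, 5],
     [0, 5, 7, 6, 8, 1, 3, 2, 4, 10, 9, 11, 12, 14, 13],
     [5, 1, 9, 11, 10, 0, 6, 8, 7, 2, 4, 3, 13, 12, 14]]
    4 (by decide +kernel) (by unfold Good; decide +kernel) (by decide +kernel) (by decide +kernel)

/-- The triples without vertex 6. -/
def rest : List ℕ :=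
  [56, 52, 44, 28, 50, 42, 26, 38, 22, 14, 49, 41, 25, 37, 21, 13, 35, 19, 11, 7]

/-- The weights of the triples without vertex 6, plus one. -/
def restIncr : List ℕ :=
  [5070602400912917611003334623233, 633825300114114705156061790209, 1237940039285384672964509697,
   4722366487267691729409, 79228162514264338152023916545, 154742504910673084135243777,
   590295810908461469761, 2417851639229266956156929, 9223372045444714505, 18014398526263298,
   9903520314283042269120430081, 19342813113834135517134849, 73786976363557683777,
   302231454903658369548289, 1152921505680589321, 2251799815782914, 37778931862957296222209,
   144115188210073673, 281474976972866, 35184372121610]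

theorem leafSum_0 : leafSum link6 restIncr reps6_0 = 18161635 := by decide +kernel

theorem leafSum_1 : leafSum link6 restIncr reps6_1 = 6346500 := by decide +kernel

theorem leafSum_2 : leafSum link6 restIncr reps6_2 = 8844708 := by decide +kernel

theorem leafSum_3 : leafSum link6 restIncr reps6_3 = 1980892 := by decide +kernel

theorem card_allFree : allFree.card = 35333735 := by
  rw [← wsum_nil_one, wsum_link4, wsum_link5, wsum_link6,
    wsum_eq_leafSum (rest := rest) (ds := restIncr) (by decide +kernel) (by decide +kernel)
      (by decide +kernel)]
  have happ : ∀ V W, leafSum link6 restIncr (V ++ W) =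
      leafSum link6 restIncr V + leafSum link6 restIncr W := fun V W => by simp [leafSum]
  rw [happ, happ, happ, leafSum_0, leafSum_1, leafSum_2, leafSum_3]

/-! ### Summation over the conjugacy classes -/

theorem fixCount_id : ∀ τ : Perm (Fin 7), τ.cycleType = 0 → fixCount τ = 35333735 := by
  intro τ hτ
  obtain rfl := Perm.cycleType_eq_zero.1 hτ
  rw [fixCount_eq_card 1 allFree fun E => by simp [move_one], card_allFree]

/-- The cycle types of the permutations of seven points (fixed points omitted), each paired with
the number of hypergraphs fixed by a permutation of that type. -/
def classes : Finset (Multiset ℕ × ℕ) :=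
  {({7}, 10), ({6}, 24), ({5, 2}, 10), ({5}, 20), ({4, 3}, 6), ({4, 2}, 125), ({4}, 75),
    ({3, 3}, 476), ({3, 2, 2}, 58), ({3, 2}, 62), ({3}, 506), ({2, 2, 2}, 13629),
    ({2, 2}, 20659), ({2}, 87185), (0, 35333735)}

theorem fixCount_of_mem_classes {p : Multiset ℕ × ℕ} (hp : p ∈ classes) (τ : Perm (Fin 7))
    (hτ : τ.cycleType = p.1) : fixCount τ = p.2 := by
  simp only [classes, mem_insert, mem_singleton] at hp
  rcases hp with rfl | rfl | rfl | rfl | rfl | rfl | rfl | rfl | rfl | rfl | rfl | rfl | rfl |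
    rfl | rfl
  exacts [fixCount_7 τ hτ, fixCount_6 τ hτ, fixCount_5_2 τ hτ, fixCount_5 τ hτ,
    fixCount_4_3 τ hτ, fixCount_4_2 τ hτ, fixCount_4 τ hτ, fixCount_3_3 τ hτ,
    fixCount_3_2_2 τ hτ, fixCount_3_2 τ hτ, fixCount_3 τ hτ, fixCount_2_2_2 τ hτ,
    fixCount_2_2 τ hτ, fixCount_2 τ hτ, fixCount_id τ hτ]

/-- The permutations of cycle type `m`. -/
def ofType (m : Multiset ℕ) : Finset (Perm (Fin 7)) := univ.filter fun τ => τ.cycleType = m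

theorem card_ofType (m : Multiset ℕ) : (ofType m).card =
    if m.sum ≤ 7 ∧ ∀ a ∈ m, 2 ≤ a then
      Nat.factorial 7 / (Nat.factorial (7 - m.sum) * m.prod *
        ∏ n ∈ m.toFinset, Nat.factorial (m.count n)) else 0 := by
  have h := Perm.card_of_cycleType (Fin 7) m
  rw [Fintype.card_fin] at h
  rw [ofType, ← h]

theorem pairwiseDisjoint_ofType :
    (classes : Set (Multiset ℕ × ℕ)).PairwiseDisjoint fun p => ofType p.1 := by
  have inj : ∀ p ∈ classes, ∀ q ∈ classes, p.1 = q.1 → p = q := by decide +kernel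
  intro p hp q hq hpq
  refine disjoint_left.2 fun τ hτp hτq => hpq (inj p hp q hq ?_)
  exact (mem_filter.1 hτp).2.symm.trans (mem_filter.1 hτq).2

/-- The listed classes exhaust the symmetric group, because their sizes add up to `7!`. -/
theorem biUnion_ofType : classes.biUnion (fun p => ofType p.1) = univ := by
  apply eq_univ_of_card
  rw [card_biUnion pairwiseDisjoint_ofType, Fintype.card_perm, Fintype.card_fin]
  simp only [card_ofType]
  decide +kernel

theorem sum_fixCount_eq_mul : ∑ σ, fixCount σ = 8157 * 5040 := by
  rw [← biUnion_ofType, sum_biUnion pairwiseDisjoint_ofType]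
  have h : ∀ p ∈ classes, ∑ τ ∈ ofType p.1, fixCount τ = (ofType p.1).card * p.2 := fun p hp =>
    sum_const_nat fun τ hτ => fixCount_of_mem_classes hp τ (mem_filter.1 hτ).2
  rw [sum_congr rfl h]
  simp only [card_ofType]
  decide +kernel

/-- The number of isomorphism classes of `K₄⁻`-free 3-uniform hypergraphs on
7 vertices is exactly 8157. -/
theorem card_K4minus_free_7 : Nat.card (Quot IsoHG7) = 8157 := by
  exact Nat.eq_of_mul_eq_mul_right (by norm_num) (sum_fixCount.symm.trans sum_fixCount_eq_mul)
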